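/- arXiv:1107.5339 — 7 statements merged into one kernel-verified Lean document; each statement's English description precedes it below -/
import Mathlib

section
/- Let G be a group acting properly discontinuously on a topological space X (for all compact K, L ⊆ X, the set {g ∈ G : (g • K) ∩ L ≠ ∅} is finite), let n ≥ 1 and let P be a subgroup of Equiv.Perm (Fin n). Then the action of the permutational wreath product (Fin n → G) ⋊ P on Fin n → X (with the product topology) given by ((f, σ) • x) i = f i • x (σ⁻¹ i) is properly discontinuous. -/
open Pointwise

/-- The natural action of `Equiv.Perm (Fin d)` on `Fin d → G`, `(σ • f) i = f (σ⁻¹ i)`,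
as a homomorphism to the automorphism group. -/
def permAut (G : Type*) [Group G] (d : ℕ) :
    Equiv.Perm (Fin d) →* MulAut (Fin d → G) where
  toFun σ :=
    { toFun := fun f i => f (σ⁻¹ i)
      invFun := fun f i => f (σ i)
      left_inv := fun f => funext fun i => by simp
      right_inv := fun f => funext fun i => by simp
      map_mul' := fun f g => rfl }
  map_one' := by
    ext f i
    simp
  map_mul' := fun σ τ => by
    ext f i
    simp [mul_inv_rev]

/-- The permutational wreath product `G ≀ P` of `G` with a subgroup
`P ≤ Equiv.Perm (Fin n)`: the semidirect product `(Fin n → G) ⋊ P`. -/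
abbrev WrP (G : Type*) [Group G] (n : ℕ) (P : Subgroup (Equiv.Perm (Fin n))) :=
  (Fin n → G) ⋊[(permAut G n).comp P.subtype] P

/-- The action of the wreath product on `Fin n → X`: `((f, σ) • x) i = f i • x (σ⁻¹ i)`. -/
def wrSmul {G X : Type*} [Group G] [SMul G X] {n : ℕ}
    {P : Subgroup (Equiv.Perm (Fin n))} (w : WrP G n P) (x : Fin n → X) :
    Fin n → X :=
  fun i => w.left i • x ((w.right : Equiv.Perm (Fin n))⁻¹ i)

/-- If a group `G` acts properly discontinuously on a topological space `X`, then for `n ≥ 1`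
and a subgroup `P` of `Equiv.Perm (Fin n)` the action
`((f, σ) • x) i = f i • x (σ⁻¹ i)` of the permutational wreath product `(Fin n → G) ⋊ P`
on `Fin n → X` (product topology) is properly discontinuous. -/
theorem wreath_product_properly_discontinuous
    (G X : Type*) [Group G] [TopologicalSpace X] [MulAction G X]
    (hG : ∀ K L : Set X, IsCompact K → IsCompact L →
      {g : G | (g • K) ∩ L ≠ ∅}.Finite)
    (n : ℕ) (hn : 1 ≤ n) (P : Subgroup (Equiv.Perm (Fin n))) :
    ∀ K L : Set (Fin n → X), IsCompact K → IsCompact L →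
      {w : WrP G n P | (wrSmul w '' K) ∩ L ≠ ∅}.Finite := by
  intro K L hK hL
  have hfin : ∀ i : Fin n, (⋃ j : Fin n, {g : G |
      (g • ((fun x : Fin n → X => x j) '' K)) ∩ ((fun x : Fin n → X => x i) '' L) ≠ ∅}).Finite :=
    fun i => Set.finite_iUnion fun j =>
      hG _ _ (hK.image (continuous_apply j)) (hL.image (continuous_apply i))
  have hprod := (Set.Finite.pi' hfin).prod (Set.finite_univ (α := P))
  have hinj : Function.Injective (fun w : WrP G n P => (w.left, w.right)) := by
    intro a b h
    exact SemidirectProduct.ext (congrArg Prod.fst h) (congrArg Prod.snd h)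
  refine (hprod.preimage hinj.injOn).subset ?_
  intro w hw
  obtain ⟨y, ⟨x, hx, rfl⟩, hy⟩ := Set.nonempty_iff_ne_empty.mpr hw
  refine ⟨fun i => Set.mem_iUnion.mpr ⟨(w.right : Equiv.Perm (Fin n))⁻¹ i, ?_⟩, Set.mem_univ _⟩
  exact Set.nonempty_iff_ne_empty.mp
    ⟨wrSmul w x i, Set.smul_mem_smul_set ⟨x, hx, rfl⟩, ⟨_, hy, rfl⟩⟩
end

section
/- Let (G_n, φ_n, d_n) be a similar group contracting to a sequence of finite subsets (N_n). For each n, let F_n be the presented group with generating set N_n and relators all words of length at most 3 in the alphabet N_n that represent the identity element of G_n, let ι_n : N_n → F_n be the canonical map of generators, and let π_n : F_n → G_n be the homomorphism sending ι_n(x) to x. Then for every n there exists a unique group homomorphism φ̂_n : F_n → F_{n+1} ≀ d_{n+1} such that for every x ∈ N_n, the permutation part of φ̂_n(ι_n x) equals the permutation part of φ_n(x), and the i-th entry of φ̂_n(ι_n x) equals ι_{n+1} applied to the i-th entry of φ_n(x) (these entries lie in N_{n+1} by the contraction hypothesis). -/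
/-- The permutational wreath product `G ≀ d = (Fin d → G) ⋊ Equiv.Perm (Fin d)`. -/
abbrev Wr (G : Type*) [Group G] (d : ℕ) :=
  (Fin d → G) ⋊[permAut G d] Equiv.Perm (Fin d)

/-- Multi-indices for the entries of `φ_n^m`: the `k`-th letter indexes a coordinate at
level `n + k`. -/
def Word (d : ℕ → ℕ) (n m : ℕ) : Type := (k : Fin m) → Fin (d (n + k))

/-- The entry (state) of `φ_n^m (g)` at the multi-index `w : Word d n m`, for a similar
group given by `φ n : G n →* (G (n+1)) ≀ (d n)`. -/
def st {G : ℕ → Type*} [∀ n, Group (G n)] {d : ℕ → ℕ}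
    (φ : ∀ n, G n →* Wr (G (n+1)) (d n)) (n : ℕ) :
    (m : ℕ) → G n → Word d n m → G (n + m)
  | 0, g, _ => g
  | m+1, g, w =>
      (φ (n+m) (st φ n m g fun k => w k.castSucc)).left (w (Fin.last m))

/-- Relators: all words of length at most 3 in the alphabet `N n` that represent the
identity of `G n`. -/
def rels {G : ℕ → Type*} [∀ n, Group (G n)] (N : ∀ n, Set (G n)) (n : ℕ) :
    Set (FreeGroup (N n)) :=
  {w : FreeGroup (N n) |
    (∃ l : List (N n), l.length ≤ 3 ∧ w = (l.map FreeGroup.of).prod) ∧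
    FreeGroup.lift (fun x : N n => (x : G n)) w = 1}

/-- The finitely presented cover `F n`: generators `N n`, relators the words of length at
most 3 in `N n` that are trivial in `G n`. -/
abbrev FGrp {G : ℕ → Type*} [∀ n, Group (G n)] (N : ∀ n, Set (G n)) (n : ℕ) :=
  PresentedGroup (rels N n)

/-- The canonical map of generators `ι n : N n → F n`. -/
def iota {G : ℕ → Type*} [∀ n, Group (G n)] (N : ∀ n, Set (G n)) (n : ℕ)
    (x : N n) : FGrp N n :=
  PresentedGroup.of x

/-- The image of a generator in the wreath product of the next cover. -/
def genImg {G : ℕ → Type} [∀ n, Group (G n)] (d : ℕ → ℕ)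
    (φ : ∀ n, G n →* Wr (G (n+1)) (d n)) (N : ∀ n, Set (G n))
    (hmem : ∀ (n : ℕ) (x : N n) (i : Fin (d n)), (φ n (x : G n)).left i ∈ N (n+1))
    (n : ℕ) (x : N n) : Wr (FGrp N (n+1)) (d n) :=
  ⟨fun i => iota N (n+1) ⟨(φ n (x : G n)).left i, hmem n x i⟩, (φ n (x : G n)).right⟩

/-- Entries of the image of a word are words of the same length. -/
theorem genImg_prod {G : ℕ → Type} [∀ n, Group (G n)] (d : ℕ → ℕ)
    (φ : ∀ n, G n →* Wr (G (n+1)) (d n)) (N : ∀ n, Set (G n))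
    (hmem : ∀ (n : ℕ) (x : N n) (i : Fin (d n)), (φ n (x : G n)).left i ∈ N (n+1))
    (n : ℕ) (l : List (N n)) :
    (l.map (genImg d φ N hmem n)).prod.right
      = (φ n (l.map (fun x : N n => (x : G n))).prod).right ∧
    ∀ i : Fin (d n), ∃ k : List (N (n+1)), k.length = l.length ∧
      (l.map (genImg d φ N hmem n)).prod.left i = (k.map (iota N (n+1))).prod ∧
      (φ n (l.map (fun x : N n => (x : G n))).prod).left i
        = (k.map (fun x : N (n+1) => (x : G (n+1)))).prod := by
  induction l with
  | nil => exact ⟨by simp, fun i => ⟨[], by simp⟩⟩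
  | cons x l ih =>
    obtain ⟨h1, h2⟩ := ih
    refine ⟨?_, fun i => ?_⟩
    · rw [List.map_cons, List.prod_cons, List.map_cons, List.prod_cons, map_mul,
        SemidirectProduct.mul_right, SemidirectProduct.mul_right, h1]
      rfl
    · obtain ⟨k, hk, h3, h4⟩ := h2 ((φ n (x : G n)).right⁻¹ i)
      refine ⟨⟨(φ n (x : G n)).left i, hmem n x i⟩ :: k, by simp [hk], ?_, ?_⟩
      · rw [List.map_cons, List.prod_cons, List.map_cons, List.prod_cons, ← h3]
        rfl
      · rw [List.map_cons, List.prod_cons, List.map_cons, List.prod_cons, ← h4, map_mul]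
        rfl

/-- Let `(G n, φ n, d n)` be a similar group contracting to the sequence of finite subsets
`(N n)`.  Then for every `n` there is a unique homomorphism `φ̂ n : F n →* F (n+1) ≀ d n`
between the presented covers such that `φ̂ n (ι n x)` has the same permutation part as
`φ n x` and its `i`-th entry is `ι (n+1)` of the `i`-th entry of `φ n x`. -/
theorem exists_unique_induced_hom_on_presented_cover
    {G : ℕ → Type} [∀ n, Group (G n)] (d : ℕ → ℕ)
    (φ : ∀ n, G n →* Wr (G (n+1)) (d n))
    (N : ∀ n, Set (G n)) (hfin : ∀ n, (N n).Finite)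
    (hmem : ∀ (n : ℕ) (x : N n) (i : Fin (d n)), (φ n (x : G n)).left i ∈ N (n+1))
    (hcontr : ∀ (n : ℕ) (g : G n), ∃ M : ℕ, ∀ m ≥ M, ∀ w : Word d n m,
      st φ n m g w ∈ N (n+m)) :
    ∀ n : ℕ, ∃! φhat : FGrp N n →* Wr (FGrp N (n+1)) (d n),
      ∀ x : N n,
        (φhat (iota N n x)).right = (φ n (x : G n)).right ∧
        ∀ i : Fin (d n), (φhat (iota N n x)).left i =
          iota N (n+1) ⟨(φ n (x : G n)).left i, hmem n x i⟩ := by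
  intro n
  have key : ∀ r ∈ rels N n, FreeGroup.lift (genImg d φ N hmem n) r = 1 := by
    rintro r ⟨⟨l, hl, rfl⟩, hr⟩
    have e1 : FreeGroup.lift (genImg d φ N hmem n) (l.map FreeGroup.of).prod
        = (l.map (genImg d φ N hmem n)).prod := by
      rw [map_list_prod, List.map_map]
      congr 2
    have e2 : (l.map (fun x : N n => (x : G n))).prod = 1 := by
      rw [← hr, map_list_prod, List.map_map]
      congr 2
      funext x
      simp
    obtain ⟨h1, h2⟩ := genImg_prod d φ N hmem n l
    rw [e2, map_one] at h1
    rw [e1]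
    refine SemidirectProduct.ext (funext fun i => ?_) h1
    obtain ⟨k, hk, h3, h4⟩ := h2 i
    rw [e2, map_one] at h4
    rw [h3]
    have hrel : (k.map FreeGroup.of).prod ∈ rels N (n+1) := by
      refine ⟨⟨k, hk ▸ hl, rfl⟩, ?_⟩
      rw [map_list_prod, List.map_map]
      refine Eq.trans ?_ h4.symm
      congr 2
      funext x
      simp
    have h5 := PresentedGroup.one_of_mem hrel
    rw [map_list_prod, List.map_map] at h5
    exact h5
  refine ⟨PresentedGroup.toGroup key, fun x => ?_, fun ψ hψ => ?_⟩
  · have h : PresentedGroup.toGroup key (iota N n x) = genImg d φ N hmem n x :=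
      PresentedGroup.toGroup.of key
    rw [h]
    exact ⟨rfl, fun i => rfl⟩
  · refine PresentedGroup.ext fun x => ?_
    rw [PresentedGroup.toGroup.of key]
    exact SemidirectProduct.ext (funext fun i => (hψ x).2 i) (hψ x).1
end

section
/- Let (G_n, φ_n, d_n) be a similar group contracting to a sequence of finite subsets (N_n), let F_n be the presented group with generating set N_n and relators all words of length at most 3 in the alphabet N_n that represent the identity of G_n, let ι_n : N_n → F_n be the map of generators, and let φ̂_n : F_n → F_{n+1} ≀ d_{n+1} be the induced homomorphisms (the permutation part of φ̂_n(ι_n x) equals that of φ_n(x) and its entries are the ι_{n+1}-images of the entries of φ_n(x)). Then the similar group (F_n, φ̂_n, d_n) contracts to the sequence of finite subsets (ι_n(N_n) ∪ {1}). -/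
section CoverHelpers

/-- One step down: all first-level entries satisfy `Q`. -/
def stepP {G : ℕ → Type*} [∀ n, Group (G n)] {d : ℕ → ℕ}
    (φ : ∀ n, G n →* Wr (G (n+1)) (d n)) (Q : ∀ n, G n → Prop) : ∀ n, G n → Prop :=
  fun n g => ∀ i, Q (n+1) ((φ n g).left i)

/-- All entries at depth `m` satisfy `Q`. -/
def DP {G : ℕ → Type*} [∀ n, Group (G n)] {d : ℕ → ℕ}
    (φ : ∀ n, G n →* Wr (G (n+1)) (d n)) (Q : ∀ n, G n → Prop) (m : ℕ) : ∀ n, G n → Prop :=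
  (stepP φ)^[m] Q

theorem wr_mul_left {G : Type*} [Group G] {d : ℕ} (a b : Wr G d) (i : Fin d) :
    (a * b).left i = a.left i * b.left (a.right⁻¹ i) := rfl

theorem wr_inv_left {G : Type*} [Group G] {d : ℕ} (a : Wr G d) (i : Fin d) :
    (a⁻¹).left i = (a.left (a.right i))⁻¹ := by
  simp [SemidirectProduct.inv_left, permAut]
  rfl

section
variable {G : ℕ → Type*} [∀ n, Group (G n)] {d : ℕ → ℕ}
  (φ : ∀ n, G n →* Wr (G (n+1)) (d n))

theorem DP_succ (Q : ∀ n, G n → Prop) (m n : ℕ) (g : G n) :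
    DP φ Q (m+1) n g ↔ ∀ i, DP φ Q m (n+1) ((φ n g).left i) := by
  unfold DP
  rw [Function.iterate_succ_apply']
  rfl

theorem DP_iff (m : ℕ) : ∀ (Q : ∀ n, G n → Prop) (n : ℕ) (g : G n),
    (∀ w : Word d n m, Q (n+m) (st φ n m g w)) ↔ DP φ Q m n g := by
  induction m with
  | zero =>
    intro Q n g
    constructor
    · intro h
      exact h (fun k => k.elim0)
    · intro h w
      exact h
  | succ m ih =>
    intro Q n g
    have e : DP φ Q (m+1) n g ↔ DP φ (stepP φ Q) m n g := Iff.rfl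
    rw [e, ← ih]
    constructor
    · intro h w i
      let W : Word d n (m+1) := Fin.snoc (α := fun k : Fin (m+1) => Fin (d (n + k))) w i
      have e1 : (fun k : Fin m => W k.castSucc) = w := by
        funext k
        exact Fin.snoc_castSucc (α := fun k : Fin (m+1) => Fin (d (n + k))) i w k
      have e2 : W (Fin.last m) = i :=
        Fin.snoc_last (α := fun k : Fin (m+1) => Fin (d (n + k))) i w
      have h1 : Q (n + m + 1) ((φ (n+m) (st φ n m g fun k => W k.castSucc)).left
        (W (Fin.last m))) := h W
      rw [e2] at h1
      exact e1 ▸ h1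
    · intro h w
      exact h (fun k => w k.castSucc) (w (Fin.last m))

theorem DP_mono_le (Q : ∀ n, G n → Prop) (hQ : ∀ n g, Q n g → stepP φ Q n g)
    {m m' : ℕ} (h : m ≤ m') : ∀ (n : ℕ) (g : G n), DP φ Q m n g → DP φ Q m' n g := by
  induction m generalizing m' with
  | zero =>
    clear h
    induction m' with
    | zero => exact fun n g h => h
    | succ k ih =>
      intro n g h
      rw [DP_succ]
      exact fun i => ih _ _ (hQ n g h i)
  | succ m ih =>
    obtain ⟨k, rfl⟩ : ∃ k, m' = k + 1 := ⟨m' - 1, by omega⟩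
    intro n g hg
    rw [DP_succ] at hg ⊢
    exact fun i => ih (by omega) _ _ (hg i)

theorem DP_pm (N : ∀ n, Set (G n)) (m : ℕ) : ∀ (n : ℕ) (g : G n),
    DP φ (fun n z => z ∈ N n) m n g → DP φ (fun n z => z ∈ N n) m n g⁻¹ →
    DP φ (fun n z => z ∈ N n ∧ z⁻¹ ∈ N n) m n g := by
  induction m with
  | zero => exact fun n g h h' => ⟨h, h'⟩
  | succ m ih =>
    intro n g h h'
    rw [DP_succ] at h h' ⊢
    intro i
    refine ih _ _ (h i) ?_
    have := h' ((φ n g).right⁻¹ i)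
    rw [map_inv, wr_inv_left] at this
    simpa using this

theorem DP_mul (Q : ∀ n, G n → Prop) (hQ : ∀ n g, Q n g → stepP φ Q n g)
    (h2 : ∀ n g h, Q n g → Q n h → ∃ M, DP φ Q M n (g * h)) (m : ℕ) :
    ∀ (n : ℕ) (g h : G n), DP φ Q m n g → DP φ Q m n h → ∃ M, DP φ Q M n (g * h) := by
  induction m with
  | zero => exact h2
  | succ m ih =>
    intro n g h hg hh
    rw [DP_succ] at hg hh
    have key : ∀ i, ∃ M, DP φ Q M (n+1) ((φ n (g * h)).left i) := by
      intro i
      rw [map_mul, wr_mul_left]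
      exact ih _ _ _ (hg _) (hh _)
    choose M hM using key
    refine ⟨Finset.univ.sup M + 1, ?_⟩
    rw [DP_succ]
    exact fun i => DP_mono_le φ Q hQ (Finset.le_sup (Finset.mem_univ i)) _ _ (hM i)

end

theorem iota_word {G : ℕ → Type*} [∀ n, Group (G n)] (N : ∀ n, Set (G n)) (n : ℕ)
    (l : List (N n)) (hl : l.length ≤ 3) (h : (l.map (fun x : N n => (x : G n))).prod = 1) :
    (l.map (iota N n)).prod = 1 := by
  have hm : (l.map FreeGroup.of).prod ∈ rels N n := by
    refine ⟨⟨l, hl, rfl⟩, ?_⟩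
    rw [map_list_prod, List.map_map, ← h]
    congr 1
    apply List.map_congr_left
    intro a _
    simp
  have := PresentedGroup.one_of_mem hm
  rw [map_list_prod, List.map_map] at this
  exact this

theorem iota_inv {G : ℕ → Type*} [∀ n, Group (G n)] (N : ∀ n, Set (G n)) (n : ℕ)
    (x y : N n) (h : (x : G n) * y = 1) : (iota N n x)⁻¹ = iota N n y := by
  have := iota_word N n [x, y] (by simp) (by simpa using h)
  simp only [List.map_cons, List.map_nil, List.prod_cons, List.prod_nil, mul_one] at this
  exact inv_eq_of_mul_eq_one_right this

theorem iota_mul {G : ℕ → Type*} [∀ n, Group (G n)] (N : ∀ n, Set (G n)) (n : ℕ)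
    (x y : N n) (h : (x : G n) * y ∈ N n) (h' : ((x : G n) * y)⁻¹ ∈ N n) :
    iota N n x * iota N n y = iota N n ⟨_, h⟩ := by
  have h3 := iota_word N n [x, y, ⟨_, h'⟩] (by simp) (by simp)
  have h2 := iota_inv N n ⟨_, h'⟩ ⟨_, h⟩ (by simp)
  simp only [List.map_cons, List.map_nil, List.prod_cons, List.prod_nil, mul_one] at h3
  rw [← h2, eq_inv_iff_mul_eq_one, mul_assoc]
  exact h3

end CoverHelpers

/-- Lemma 2 of the paper: if the similar group `(G n, φ n, d n)` contracts to the sequence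
of finite subsets `(N n)`, and `φ̂ n : F n →* F (n+1) ≀ d n` are the induced homomorphisms
on the presented covers, then the similar group `(F n, φ̂ n, d n)` contracts to the sequence
of finite subsets `ι n '' N n ∪ {1}`. -/
theorem presented_cover_contracts
    {G : ℕ → Type} [∀ n, Group (G n)] (d : ℕ → ℕ)
    (φ : ∀ n, G n →* Wr (G (n+1)) (d n))
    (N : ∀ n, Set (G n)) (hfin : ∀ n, (N n).Finite)
    (hmem : ∀ (n : ℕ) (x : N n) (i : Fin (d n)), (φ n (x : G n)).left i ∈ N (n+1))
    (hcontr : ∀ (n : ℕ) (g : G n), ∃ M : ℕ, ∀ m ≥ M, ∀ w : Word d n m,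
      st φ n m g w ∈ N (n+m))
    (φhat : ∀ n, FGrp N n →* Wr (FGrp N (n+1)) (d n))
    (hφhat : ∀ (n : ℕ) (x : N n),
      (φhat n (iota N n x)).right = (φ n (x : G n)).right ∧
      ∀ i : Fin (d n), (φhat n (iota N n x)).left i =
        iota N (n+1) ⟨(φ n (x : G n)).left i, hmem n x i⟩) :
    -- the sets `ι n '' N n ∪ {1}` are finite,
    (∀ n : ℕ, (Set.range (iota N n) ∪ {1} : Set (FGrp N n)).Finite) ∧
    -- entries of `φ̂ n` of nucleus elements stay in the nucleus,
    (∀ n : ℕ, ∀ x ∈ (Set.range (iota N n) ∪ {1} : Set (FGrp N n)), ∀ i : Fin (d n),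
      (φhat n x).left i ∈ (Set.range (iota N (n+1)) ∪ {1} : Set (FGrp N (n+1)))) ∧
    -- and `(F n, φ̂ n)` contracts to `(ι n '' N n ∪ {1})`.
    (∀ (n : ℕ) (g : FGrp N n), ∃ M : ℕ, ∀ m ≥ M, ∀ w : Word d n m,
      st φhat n m g w ∈ (Set.range (iota N (n+m)) ∪ {1} : Set (FGrp N (n+m)))) := by
  have hstep : ∀ n : ℕ, ∀ x ∈ (Set.range (iota N n) ∪ {1} : Set (FGrp N n)), ∀ i : Fin (d n),
      (φhat n x).left i ∈ (Set.range (iota N (n+1)) ∪ {1} : Set (FGrp N (n+1))) := by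
    rintro n x (⟨y, rfl⟩ | hx) i
    · left
      exact ⟨_, ((hφhat n y).2 i).symm⟩
    · right
      rw [Set.mem_singleton_iff] at hx
      subst hx
      rw [map_one]
      rfl
  refine ⟨?_, hstep, ?_⟩
  · intro n
    have := (hfin n).to_subtype
    exact (Set.finite_range _).union (Set.finite_singleton _)
  let Q : ∀ n, FGrp N n → Prop := fun n z => z ∈ (Set.range (iota N n) ∪ {1} : Set (FGrp N n))
  let R : ∀ n, G n → Prop := fun n z => z ∈ N n ∧ z⁻¹ ∈ N n
  have hQ : ∀ n g, Q n g → stepP φhat Q n g := hstep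
  have hR : ∀ n (g : G n), ∃ M, DP φ R M n g := by
    intro n g
    obtain ⟨M, hM⟩ := hcontr n g
    obtain ⟨M', hM'⟩ := hcontr n g⁻¹
    refine ⟨max M M', DP_pm φ N _ n g ?_ ?_⟩
    · exact (DP_iff φ _ (fun n z => z ∈ N n) n g).1 (hM _ (le_max_left _ _))
    · exact (DP_iff φ _ (fun n z => z ∈ N n) n g⁻¹).1 (hM' _ (le_max_right _ _))
  have hmul : ∀ M n (x y : N n), DP φ R M n ((x : G n) * y) →
      DP φhat Q M n (iota N n x * iota N n y) := by
    intro M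
    induction M with
    | zero =>
      intro n x y h
      exact Or.inl ⟨_, (iota_mul N n x y h.1 h.2).symm⟩
    | succ M ih =>
      intro n x y h
      rw [DP_succ] at h ⊢
      intro i
      have := h i
      rw [map_mul, wr_mul_left] at this ⊢
      rw [(hφhat n x).1, (hφhat n x).2, (hφhat n y).2]
      exact ih _ _ _ this
  have hinv : ∀ M n (x : N n), DP φ R M n (x : G n) → DP φhat Q M n (iota N n x)⁻¹ := by
    intro M
    induction M with
    | zero =>
      intro n x h
      exact Or.inl ⟨⟨_, h.2⟩, (iota_inv N n x ⟨_, h.2⟩ (by simp)).symm⟩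
    | succ M ih =>
      intro n x h
      rw [DP_succ] at h ⊢
      intro i
      rw [map_inv, wr_inv_left, (hφhat n x).1, (hφhat n x).2]
      exact ih _ _ (h _)
  have h2 : ∀ n g h, Q n g → Q n h → ∃ M, DP φhat Q M n (g * h) := by
    rintro n g h (⟨x, rfl⟩ | hg) hh
    · rcases hh with ⟨y, rfl⟩ | hh
      · obtain ⟨M, hM⟩ := hR n ((x : G n) * y)
        exact ⟨M, hmul M n x y hM⟩
      · rw [Set.mem_singleton_iff] at hh
        subst hh
        rw [mul_one]
        exact ⟨0, Or.inl ⟨x, rfl⟩⟩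
    · rw [Set.mem_singleton_iff] at hg
      subst hg
      rw [one_mul]
      exact ⟨0, hh⟩
  have main : ∀ n (g : FGrp N n), ∃ M, DP φhat Q M n g := by
    intro n g
    induction g using PresentedGroup.induction_on with
    | _ z =>
      induction z using FreeGroup.induction_on with
      | C1 => exact ⟨0, Or.inr (by simp)⟩
      | of x => exact ⟨0, Or.inl ⟨x, rfl⟩⟩
      | inv_of x _ =>
        obtain ⟨M, hM⟩ := hR n (x : G n)
        rw [map_inv]
        exact ⟨M, hinv M n x hM⟩
      | mul a b ha hb =>
        obtain ⟨A, hA⟩ := ha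
        obtain ⟨B, hB⟩ := hb
        rw [map_mul]
        exact DP_mul φhat Q hQ h2 (max A B) n _ _
          (DP_mono_le φhat Q hQ (le_max_left _ _) _ _ hA)
          (DP_mono_le φhat Q hQ (le_max_right _ _) _ _ hB)
  intro n g
  obtain ⟨M, hM⟩ := main n g
  exact ⟨M, fun m hm => (DP_iff φhat m Q n g).2 (DP_mono_le φhat Q hQ hm n g hM)⟩
end

section
/- Let A be a finite group and let G be the group, under pointwise multiplication, of functions f : ℤ → A with finite support (f n = 1 for all but finitely many n). Define ψ : G → G ≀ 2 by letting ψ(f) have trivial permutation part and entries f₀, f₁ given by f₀(n) = f(2n) and f₁(n) = f(2n − 1). Then ψ is a group homomorphism, and the self-similar group (G, ψ) is contracting with nucleus N = {f ∈ G : f n = 1 for all n ∉ {0, 1}}: for every f ∈ G and all sufficiently large n, every entry of ψ^n(f) lies in N. -/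
/-- The group of finitely supported functions `ℤ → A` under pointwise multiplication,
as a subgroup of `ℤ → A`. -/
def finSuppSubgroup (A : Type*) [Group A] : Subgroup (ℤ → A) where
  carrier := {f | (Function.mulSupport f).Finite}
  one_mem' := by
    simp [Function.mulSupport_one]
  mul_mem' := fun hf hg => (hf.union hg).subset (Function.mulSupport_mul _ _)
  inv_mem' := fun hf => by simpa [Function.mulSupport_inv] using hf

/-- The self-similarity structure `ψ : G → G ≀ 2` on the group `G` of finitely supported
functions `ℤ → A`: `ψ f` has trivial permutation part and entries `f₀, f₁` with
`f₀ n = f (2n)` and `f₁ n = f (2n - 1)`. -/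
def psiMap (A : Type*) [Group A] (f : finSuppSubgroup A) :
    Wr (finSuppSubgroup A) 2 :=
  SemidirectProduct.mk
    ![⟨fun n => (f : ℤ → A) (2 * n), by
        have h : Function.mulSupport (fun n : ℤ => (f : ℤ → A) (2 * n)) =
            (fun n : ℤ => 2 * n) ⁻¹' Function.mulSupport (f : ℤ → A) := rfl
        show (Function.mulSupport fun n : ℤ => (f : ℤ → A) (2 * n)).Finite
        rw [h]
        exact Set.Finite.preimage (fun a _ b _ hab => by omega) f.2⟩,
      ⟨fun n => (f : ℤ → A) (2 * n - 1), by
        have h : Function.mulSupport (fun n : ℤ => (f : ℤ → A) (2 * n - 1)) =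
            (fun n : ℤ => 2 * n - 1) ⁻¹' Function.mulSupport (f : ℤ → A) := rfl
        show (Function.mulSupport fun n : ℤ => (f : ℤ → A) (2 * n - 1)).Finite
        rw [h]
        exact Set.Finite.preimage (fun a _ b _ hab => by omega) f.2⟩]
    1

/-- The entry of `ψ^m (g)` at the multi-index `w : Fin m → Fin d`, for a self-similarity
map `ψ : G → G ≀ d`. -/
def sstF {G : Type*} [Group G] {d : ℕ} (ψ : G → Wr G d) :
    (m : ℕ) → G → (Fin m → Fin d) → G
  | 0, g, _ => g
  | m+1, g, w => (ψ (sstF ψ m g fun k => w k.castSucc)).left (w (Fin.last m))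

theorem psi_step (A : Type*) [Group A] (f : finSuppSubgroup A) (K : ℕ)
    (h : ∀ n : ℤ, (n < -(K : ℤ) ∨ (K : ℤ) + 1 < n) → (f : ℤ → A) n = 1) (i : Fin 2) :
    ∀ n : ℤ, (n < -((K - 1 : ℕ) : ℤ) ∨ ((K - 1 : ℕ) : ℤ) + 1 < n) →
      (((psiMap A f).left i : finSuppSubgroup A) : ℤ → A) n = 1 := by
  intro n hn
  fin_cases i
  · show (f : ℤ → A) (2 * n) = 1
    apply h
    omega
  · show (f : ℤ → A) (2 * n - 1) = 1
    apply h
    omega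

theorem psi_iter (A : Type*) [Group A] (f : finSuppSubgroup A) (K : ℕ)
    (h : ∀ n : ℤ, (n < -(K : ℤ) ∨ (K : ℤ) + 1 < n) → (f : ℤ → A) n = 1) (m : ℕ) :
    ∀ w : Fin m → Fin 2, ∀ n : ℤ, (n < -((K - m : ℕ) : ℤ) ∨ ((K - m : ℕ) : ℤ) + 1 < n) →
      ((sstF (psiMap A) m f w : finSuppSubgroup A) : ℤ → A) n = 1 := by
  induction m with
  | zero => intro w; exact h
  | succ m ih =>
    intro w
    exact psi_step A _ (K - m) (ih _) _

/-- Let `A` be a finite group and `G` the group of finitely supported functions `ℤ → A`.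
The map `ψ : G → G ≀ 2` with trivial permutation part and entries `f₀ n = f (2n)`,
`f₁ n = f (2n - 1)` is a group homomorphism, and the self-similar group `(G, ψ)` is
contracting with nucleus `N = {f : f n = 1 for all n ∉ {0, 1}}`. -/
theorem finitely_supported_functions_contracting
    (A : Type*) [Group A] [Finite A] :
    (∀ f g : finSuppSubgroup A, psiMap A (f * g) = psiMap A f * psiMap A g) ∧
    ({f : finSuppSubgroup A | ∀ n : ℤ, n ∉ ({0, 1} : Set ℤ) → (f : ℤ → A) n = 1}.Finite) ∧
    (∀ f : finSuppSubgroup A, ∃ M : ℕ, ∀ m ≥ M, ∀ w : Fin m → Fin 2,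
      sstF (psiMap A) m f w ∈
        {f : finSuppSubgroup A | ∀ n : ℤ, n ∉ ({0, 1} : Set ℤ) → (f : ℤ → A) n = 1}) := by
  refine ⟨?_, ?_, ?_⟩
  · intro f g
    refine SemidirectProduct.ext ?_ ?_
    · funext i
      fin_cases i <;> rfl
    · exact (mul_one (1 : Equiv.Perm (Fin 2))).symm
  · refine Set.Finite.of_injOn (t := (Set.univ : Set (A × A)))
      (f := fun f : finSuppSubgroup A => ((f : ℤ → A) 0, (f : ℤ → A) 1))
      (fun _ _ => Set.mem_univ _) ?_ Set.finite_univ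
    intro f hf g hg hfg
    have h0 : (f : ℤ → A) 0 = (g : ℤ → A) 0 := congrArg Prod.fst hfg
    have h1 : (f : ℤ → A) 1 = (g : ℤ → A) 1 := congrArg Prod.snd hfg
    apply Subtype.ext
    funext n
    by_cases hn : n ∈ ({0, 1} : Set ℤ)
    · rcases hn with rfl | rfl
      · exact h0
      · exact h1
    · rw [hf n hn, hg n hn]
  · intro f
    have hfin : (Function.mulSupport (f : ℤ → A)).Finite := f.2
    obtain ⟨a, ha⟩ := hfin.bddBelow
    obtain ⟨b, hb⟩ := hfin.bddAbove
    refine ⟨a.natAbs + b.natAbs, fun m hm w n hn => ?_⟩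
    refine psi_iter A f (a.natAbs + b.natAbs) ?_ m w n ?_
    · intro k hk
      by_contra hne
      have h1 : a ≤ k := ha hne
      have h2 : k ≤ b := hb hne
      omega
    · simp only [Set.mem_insert_iff, Set.mem_singleton_iff] at hn
      omega
end

section
/- Let (G_n, φ_n, d_n) be a similar group in which every group G_n is countable. Then there exists a sequence of finite subsets N_n ⊆ G_n such that: for every x ∈ N_n, every entry of φ_n(x) lies in N_{n+1}; and for every n and every g ∈ G_n, for all sufficiently large m every entry of φ_n^m(g) lies in N_{n+m}. That is, the similar group contracts to (N_n). -/
/-- Entries, at level `n`, of the first `k + 1` elements of each group of level at most `n`. -/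
def entrySet {G : ℕ → Type} [∀ n, Group (G n)] {d : ℕ → ℕ}
    (φ : ∀ n, G n →* Wr (G (n+1)) (d n)) (f : ∀ n, ℕ → G n) (k : ℕ) : ∀ n, Set (G n)
  | 0 => f 0 '' Set.Iic k
  | n+1 => f (n+1) '' Set.Iic k ∪
      ⋃ x ∈ entrySet φ f k n, Set.range (φ n x).left

/-- Every similar group all of whose groups are countable contracts to some sequence of
finite subsets. -/
theorem countable_similar_group_contracts
    {G : ℕ → Type} [∀ n, Group (G n)] [∀ n, Countable (G n)] (d : ℕ → ℕ)
    (φ : ∀ n, G n →* Wr (G (n+1)) (d n)) :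
    ∃ N : ∀ n, Set (G n),
      (∀ n, (N n).Finite) ∧
      (∀ n : ℕ, ∀ x ∈ N n, ∀ i : Fin (d n), (φ n x).left i ∈ N (n+1)) ∧
      (∀ (n : ℕ) (g : G n), ∃ M : ℕ, ∀ m ≥ M, ∀ w : Word d n m,
        st φ n m g w ∈ N (n+m)) := by
  choose f hf using fun n => exists_surjective_nat (G n)
  have hbase : ∀ k n j, j ≤ k → f n j ∈ entrySet φ f k n := by
    intro k n j hj
    cases n with
    | zero => exact ⟨j, hj, rfl⟩
    | succ n => exact Or.inl ⟨j, hj, rfl⟩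
  have hstep : ∀ k n, ∀ x ∈ entrySet φ f k n, ∀ i, (φ n x).left i ∈ entrySet φ f k (n+1) := by
    intro k n x hx i
    exact Or.inr (Set.mem_biUnion hx ⟨i, rfl⟩)
  have hfin : ∀ k n, (entrySet φ f k n).Finite := by
    intro k n
    induction n with
    | zero => exact (Set.finite_Iic k).image _
    | succ n ih =>
      exact ((Set.finite_Iic k).image _).union (ih.biUnion fun x _ => Set.finite_range _)
  have hmono : ∀ k l, k ≤ l → ∀ n, entrySet φ f k n ⊆ entrySet φ f l n := by
    intro k l hkl n
    induction n with
    | zero => exact Set.image_mono (Set.Iic_subset_Iic.2 hkl)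
    | succ n ih =>
      exact Set.union_subset_union (Set.image_mono (Set.Iic_subset_Iic.2 hkl))
        (Set.biUnion_subset_biUnion_left ih)
  refine ⟨fun n => entrySet φ f n n, fun n => hfin n n, fun n x hx i => ?_, fun n g => ?_⟩
  · exact hmono n (n+1) (Nat.le_succ n) _ (hstep n n x hx i)
  · obtain ⟨k, rfl⟩ := hf n g
    refine ⟨k, fun m hm w => hmono k (n+m) (by omega) _ ?_⟩
    clear hm
    induction m with
    | zero => exact hbase k n k le_rfl
    | succ m ih => exact hstep k (n+m) _ (ih fun j => w j.castSucc) (w (Fin.last m))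
end

section
/- Let F be the presented group with generators a, b, c, d and relators a², b², c², d², bcd, and let φ : F → F ≀ 2 be the homomorphism determined by φ(a) = ⟨1, 1⟩σ (σ the transposition of the two coordinates), φ(b) = ⟨a, c⟩, φ(c) = ⟨a, d⟩, φ(d) = ⟨1, b⟩ (the last three with trivial permutation part). Then the self-similar group (F, φ) is contracting with nucleus the image of {1, a, b, c, d} in F: for every g ∈ F, for all sufficiently large n, every entry of φ^n(g) lies in the image of {1, a, b, c, d}. -/
/-- The four generators `a, b, c, d` of the Grigorchuk cover. -/
inductive GrigGen : Type
  | a | b | c | d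
  deriving DecidableEq

open GrigGen in
/-- The relators `a², b², c², d², bcd`. -/
def grigRels : Set (FreeGroup GrigGen) :=
  {FreeGroup.of a ^ 2, FreeGroup.of b ^ 2, FreeGroup.of c ^ 2, FreeGroup.of d ^ 2,
    FreeGroup.of b * FreeGroup.of c * FreeGroup.of d}

/-- The presented group `F = ⟨a,b,c,d ∣ a², b², c², d², bcd⟩ ≅ C₂ * (C₂ × C₂)`. -/
abbrev GrigF : Type := PresentedGroup grigRels

open GrigGen in

/-- The entry (state) of `φ^m (g)` at the multi-index `w : Fin m → Fin d`, for a
self-similarity structure `φ : G →* G ≀ d`. -/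
def sst {G : Type*} [Group G] {d : ℕ} (φ : G →* Wr G d) :
    (m : ℕ) → G → (Fin m → Fin d) → G
  | 0, g, _ => g
  | m+1, g, w => (φ (sst φ m g fun k => w k.castSucc)).left (w (Fin.last m))

/-- The nucleus. -/
def grigN : Set GrigF :=
  {1, PresentedGroup.of GrigGen.a, PresentedGroup.of GrigGen.b, PresentedGroup.of GrigGen.c,
    PresentedGroup.of GrigGen.d}

/-- All states at level `k` lie in the nucleus. -/
def grigC (φ : GrigF →* Wr GrigF 2) : ℕ → GrigF → Prop
  | 0, g => g ∈ grigN
  | k+1, g => ∀ i, grigC φ k ((φ g).left i)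

theorem grigC_sst (φ : GrigF →* Wr GrigF 2) (m : ℕ) : ∀ (k : ℕ) (g : GrigF) (w : Fin m → Fin 2),
    grigC φ (k + m) g → grigC φ k (sst φ m g w) := by
  induction m with
  | zero => intro k g w h; exact h
  | succ m ih =>
    intro k g w h
    have h' : grigC φ ((k + 1) + m) g := by
      rwa [show k + 1 + m = k + (m + 1) by omega]
    exact ih (k + 1) g (fun j => w j.castSucc) h' (w (Fin.last m))

theorem grigC_mono (φ : GrigF →* Wr GrigF 2)
    (h0 : ∀ g ∈ grigN, ∀ i, (φ g).left i ∈ grigN) (k : ℕ) :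
    ∀ g, grigC φ k g → grigC φ (k + 1) g := by
  induction k with
  | zero => intro g hg i; exact h0 g hg i
  | succ k ih => intro g hg i; exact ih _ (hg i)

theorem grigC_mono_le (φ : GrigF →* Wr GrigF 2)
    (h0 : ∀ g ∈ grigN, ∀ i, (φ g).left i ∈ grigN) (g : GrigF) (k m : ℕ) (hkm : k ≤ m)
    (h : grigC φ k g) : grigC φ m g := by
  induction m, hkm using Nat.le_induction with
  | base => exact h
  | succ m _ ih => exact grigC_mono φ h0 m g ih

theorem grigC_mul (φ : GrigF →* Wr GrigF 2)
    (h0 : ∀ g ∈ grigN, ∀ i, (φ g).left i ∈ grigN)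
    (h1 : ∀ g ∈ grigN, ∀ s ∈ grigN, ∀ i, (φ (g * s)).left i ∈ grigN) (k : ℕ) :
    ∀ g s, grigC φ k g → s ∈ grigN → grigC φ (k + 1) (g * s) := by
  induction k with
  | zero => intro g s hg hs i; exact h1 g hg s hs i
  | succ k ih =>
    intro g s hg hs i
    rw [map_mul, SemidirectProduct.mul_left]
    exact ih _ _ (hg i) (h0 s hs _)

open GrigGen in
/-- The universal contracting cover `(F, φ)` of the Alëshin–Grigorchuk group is
contracting with nucleus the image of `{1, a, b, c, d}` in `F`. -/
theorem grigorchuk_cover_contracting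
    (φ : GrigF →* Wr GrigF 2)
    (ha : φ (PresentedGroup.of a) =
      SemidirectProduct.mk ![1, 1] (Equiv.swap 0 1))
    (hb : φ (PresentedGroup.of b) =
      SemidirectProduct.mk ![PresentedGroup.of a, PresentedGroup.of c] 1)
    (hc : φ (PresentedGroup.of c) =
      SemidirectProduct.mk ![PresentedGroup.of a, PresentedGroup.of d] 1)
    (hd : φ (PresentedGroup.of d) =
      SemidirectProduct.mk ![1, PresentedGroup.of b] 1) :
    ∀ g : GrigF, ∃ M : ℕ, ∀ m ≥ M, ∀ w : Fin m → Fin 2,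
      sst φ m g w ∈
        ({1, PresentedGroup.of a, PresentedGroup.of b, PresentedGroup.of c,
          PresentedGroup.of d} : Set GrigF) := by
  have ra : (PresentedGroup.of a : GrigF) * PresentedGroup.of a = 1 := by
    have := PresentedGroup.one_of_mem (rels := grigRels) (x := FreeGroup.of a ^ 2)
      (by simp [grigRels])
    rwa [map_pow, pow_two] at this
  have rb : (PresentedGroup.of b : GrigF) * PresentedGroup.of b = 1 := by
    have := PresentedGroup.one_of_mem (rels := grigRels) (x := FreeGroup.of b ^ 2)
      (by simp [grigRels])
    rwa [map_pow, pow_two] at this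
  have rc : (PresentedGroup.of c : GrigF) * PresentedGroup.of c = 1 := by
    have := PresentedGroup.one_of_mem (rels := grigRels) (x := FreeGroup.of c ^ 2)
      (by simp [grigRels])
    rwa [map_pow, pow_two] at this
  have rd : (PresentedGroup.of d : GrigF) * PresentedGroup.of d = 1 := by
    have := PresentedGroup.one_of_mem (rels := grigRels) (x := FreeGroup.of d ^ 2)
      (by simp [grigRels])
    rwa [map_pow, pow_two] at this
  have rbcd : (PresentedGroup.of b : GrigF) * PresentedGroup.of c * PresentedGroup.of d = 1 := by
    have := PresentedGroup.one_of_mem (rels := grigRels)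
      (x := FreeGroup.of b * FreeGroup.of c * FreeGroup.of d) (by simp [grigRels])
    rwa [map_mul, map_mul] at this
  have hinv : ∀ x : GrigGen, (PresentedGroup.of x : GrigF)⁻¹ = PresentedGroup.of x := by
    intro x
    rw [inv_eq_iff_mul_eq_one]
    cases x <;> assumption
  have bc : (PresentedGroup.of b : GrigF) * PresentedGroup.of c = PresentedGroup.of d := by
    rw [← hinv d]; exact eq_inv_of_mul_eq_one_left rbcd
  have cd : (PresentedGroup.of c : GrigF) * PresentedGroup.of d = PresentedGroup.of b := by
    rw [← hinv b]; exact eq_inv_of_mul_eq_one_right (by rw [← mul_assoc]; exact rbcd)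
  have cb : (PresentedGroup.of c : GrigF) * PresentedGroup.of b = PresentedGroup.of d := by
    have := congrArg (·⁻¹) bc
    simpa only [mul_inv_rev, hinv] using this
  have dc : (PresentedGroup.of d : GrigF) * PresentedGroup.of c = PresentedGroup.of b := by
    have := congrArg (·⁻¹) cd
    simpa only [mul_inv_rev, hinv] using this
  have bd : (PresentedGroup.of b : GrigF) * PresentedGroup.of d = PresentedGroup.of c := by
    rw [← bc, ← mul_assoc, rb, one_mul]
  have db : (PresentedGroup.of d : GrigF) * PresentedGroup.of b = PresentedGroup.of c := by
    rw [← cb, mul_assoc, rb, mul_one]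
  have hN : ∀ x : GrigGen, (PresentedGroup.of x : GrigF) ∈ grigN := by
    intro x; cases x <;> simp [grigN]
  have h0 : ∀ g ∈ grigN, ∀ i, (φ g).left i ∈ grigN := by
    rintro g (rfl | rfl | rfl | rfl | rfl) i <;> fin_cases i <;>
      simp [ha, hb, hc, hd, hN] <;> simp [grigN]
  have h1 : ∀ g ∈ grigN, ∀ s ∈ grigN, ∀ i, (φ (g * s)).left i ∈ grigN := by
    have hE : ∀ x : Fin 2, (Equiv.symm (1 : Equiv.Perm (Fin 2))) x = x := fun _ => rfl
    rintro g (rfl | rfl | rfl | rfl | rfl) s (rfl | rfl | rfl | rfl | rfl) i <;>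
    first
    | (simp only [one_mul, mul_one, ra, rb, rc, rd, bc, cb, bd, db, cd, dc]
       exact h0 _ (by simp [grigN]) i)
    | (rw [map_mul, SemidirectProduct.mul_left]
       fin_cases i <;> simp [ha, hb, hc, hd, permAut, hN, hE] <;> simp [grigN])
  intro g
  have key : ∃ k, grigC φ k g := by
    have hg : g ∈ Subgroup.closure (Set.range (PresentedGroup.of (rels := grigRels))) := by
      rw [PresentedGroup.closure_range_of]; trivial
    induction hg using Subgroup.closure_induction_right with
    | one => exact ⟨0, by simp [grigC, grigN]⟩
    | mul_right x hx y hy ih =>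
      obtain ⟨k, hk⟩ := ih
      obtain ⟨t, rfl⟩ := hy
      exact ⟨k + 1, grigC_mul φ h0 h1 k _ _ hk (hN t)⟩
    | mul_inv_cancel x hx y hy ih =>
      obtain ⟨k, hk⟩ := ih
      obtain ⟨t, rfl⟩ := hy
      rw [hinv]
      exact ⟨k + 1, grigC_mul φ h0 h1 k _ _ hk (hN t)⟩
  obtain ⟨k, hk⟩ := key
  refine ⟨k, fun m hm w => ?_⟩
  have := grigC_sst φ m 0 g w (by rw [zero_add]; exact grigC_mono_le φ h0 g k m hm hk)
  exact this
end

section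
/- Let F be the presented group with generators a, b, c, d and relators a², b², c², d², bcd. Let K be the subgroup of F generated by b, c, d and let A be the subgroup generated by a. For every group homomorphism ω : K → A, there exists a unique group homomorphism φ_ω : F → F ≀ 2 such that φ_ω(a) = ⟨1, 1⟩σ (σ the transposition of the two coordinates) and φ_ω(x) = ⟨ω(x), x⟩ with trivial permutation part for each x ∈ {b, c, d}. -/
open GrigGen

/-- The subgroup `K = ⟨b, c, d⟩` of `F`. -/
def GrigK : Subgroup GrigF :=
  Subgroup.closure {PresentedGroup.of b, PresentedGroup.of c, PresentedGroup.of d}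

/-- The subgroup `A = ⟨a⟩` of `F`. -/
def GrigA : Subgroup GrigF :=
  Subgroup.closure {PresentedGroup.of a}

/-- Elements of the base group multiply coordinatewise. -/
theorem wr_mk_mul (x y x' y' : GrigF) :
    (SemidirectProduct.mk ![x, y] 1 : Wr GrigF 2) * SemidirectProduct.mk ![x', y'] 1 =
      SemidirectProduct.mk ![x * x', y * y'] 1 := by
  apply SemidirectProduct.ext
  · funext i
    fin_cases i <;> simp
  · simp

theorem wr_mk_one : (SemidirectProduct.mk ![1, 1] 1 : Wr GrigF 2) = 1 := by
  apply SemidirectProduct.ext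
  · funext i
    fin_cases i <;> simp
  · simp

theorem wr_swap_sq :
    (SemidirectProduct.mk ![1, 1] (Equiv.swap 0 1) : Wr GrigF 2) ^ 2 = 1 := by
  have h1 : (![1, 1] : Fin 2 → GrigF) = 1 := by
    funext i
    fin_cases i <;> rfl
  rw [pow_two, h1]
  apply SemidirectProduct.ext
  · simp
  · simp

theorem grig_sq (x : GrigGen) : (PresentedGroup.of x : GrigF) * PresentedGroup.of x = 1 := by
  have h : FreeGroup.of x ^ 2 ∈ grigRels := by
    cases x <;> simp [grigRels]
  have h2 := PresentedGroup.one_of_mem h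
  rw [map_pow, pow_two] at h2
  exact h2

theorem grig_bcd : (PresentedGroup.of b : GrigF) * PresentedGroup.of c * PresentedGroup.of d = 1 := by
  have h : FreeGroup.of b * FreeGroup.of c * FreeGroup.of d ∈ grigRels := by
    simp [grigRels]
  have h2 := PresentedGroup.one_of_mem h
  rw [map_mul, map_mul] at h2
  exact h2

/-- For every homomorphism `ω : K → A` there is a unique homomorphism
`φ_ω : F → F ≀ 2` with `φ_ω(a) = ⟨1,1⟩(1,2)` and `φ_ω(x) = ⟨ω(x), x⟩` for
`x ∈ {b, c, d}`: the similarity structures of the generalized Grigorchuk groups. -/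
theorem generalized_grigorchuk_similarity_exists_unique (ω : GrigK →* GrigA) :
    ∃! φω : GrigF →* Wr GrigF 2,
      φω (PresentedGroup.of a) =
        SemidirectProduct.mk ![1, 1] (Equiv.swap 0 1) ∧
      φω (PresentedGroup.of b) =
        SemidirectProduct.mk
          ![(ω ⟨PresentedGroup.of b, Subgroup.subset_closure (by simp)⟩ : GrigF),
            PresentedGroup.of b] 1 ∧
      φω (PresentedGroup.of c) =
        SemidirectProduct.mk
          ![(ω ⟨PresentedGroup.of c, Subgroup.subset_closure (by simp)⟩ : GrigF),
            PresentedGroup.of c] 1 ∧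
      φω (PresentedGroup.of d) =
        SemidirectProduct.mk
          ![(ω ⟨PresentedGroup.of d, Subgroup.subset_closure (by simp)⟩ : GrigF),
            PresentedGroup.of d] 1 := by
  have key : ∀ (x : GrigGen) (hx : (PresentedGroup.of x : GrigF) ∈ GrigK),
      (SemidirectProduct.mk ![(ω ⟨PresentedGroup.of x, hx⟩ : GrigF),
        PresentedGroup.of x] 1 : Wr GrigF 2) ^ 2 = 1 := by
    intro x hx
    have e : (⟨PresentedGroup.of x, hx⟩ : GrigK) * ⟨PresentedGroup.of x, hx⟩ = 1 :=
      Subtype.ext (grig_sq x)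
    rw [pow_two, wr_mk_mul, grig_sq, ← Subgroup.coe_mul, ← map_mul, e, map_one,
      Subgroup.coe_one, wr_mk_one]
  have hb : (PresentedGroup.of b : GrigF) ∈ GrigK := Subgroup.subset_closure (by simp)
  have hc : (PresentedGroup.of c : GrigF) ∈ GrigK := Subgroup.subset_closure (by simp)
  have hd : (PresentedGroup.of d : GrigF) ∈ GrigK := Subgroup.subset_closure (by simp)
  have e3 : (⟨PresentedGroup.of b, hb⟩ : GrigK) * ⟨PresentedGroup.of c, hc⟩ *
      ⟨PresentedGroup.of d, hd⟩ = 1 := Subtype.ext grig_bcd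
  let f : GrigGen → Wr GrigF 2 := fun x => match x with
    | a => SemidirectProduct.mk ![1, 1] (Equiv.swap 0 1)
    | b => SemidirectProduct.mk ![(ω ⟨PresentedGroup.of b, hb⟩ : GrigF), PresentedGroup.of b] 1
    | c => SemidirectProduct.mk ![(ω ⟨PresentedGroup.of c, hc⟩ : GrigF), PresentedGroup.of c] 1
    | d => SemidirectProduct.mk ![(ω ⟨PresentedGroup.of d, hd⟩ : GrigF), PresentedGroup.of d] 1
  have hf : ∀ r ∈ grigRels, FreeGroup.lift f r = 1 := by
    intro r hr
    simp only [grigRels, Set.mem_insert_iff, Set.mem_singleton_iff] at hr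
    rcases hr with rfl | rfl | rfl | rfl | rfl
    · rw [map_pow, FreeGroup.lift_apply_of]; exact wr_swap_sq
    · rw [map_pow, FreeGroup.lift_apply_of]; exact key b hb
    · rw [map_pow, FreeGroup.lift_apply_of]; exact key c hc
    · rw [map_pow, FreeGroup.lift_apply_of]; exact key d hd
    · rw [map_mul, map_mul, FreeGroup.lift_apply_of, FreeGroup.lift_apply_of,
        FreeGroup.lift_apply_of]
      simp only [f]
      rw [wr_mk_mul, wr_mk_mul, grig_bcd, ← Subgroup.coe_mul, ← Subgroup.coe_mul, ← map_mul,
        ← map_mul, e3, map_one, Subgroup.coe_one, wr_mk_one]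
  refine ⟨PresentedGroup.toGroup hf, ⟨?_, ?_, ?_, ?_⟩, ?_⟩
  · exact PresentedGroup.toGroup.of hf
  · exact PresentedGroup.toGroup.of hf
  · exact PresentedGroup.toGroup.of hf
  · exact PresentedGroup.toGroup.of hf
  · rintro ψ ⟨h1, h2, h3, h4⟩
    apply PresentedGroup.ext
    intro x
    rw [PresentedGroup.toGroup.of hf]
    cases x
    · exact h1
    · exact h2
    · exact h3
    · exact h4
end
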